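/- If u, v, w ∈ 𝒜₂, then there is a constant c_* ≥ 1, depending only on the C²-norms ‖u‖₂, ‖v‖₂, ‖w‖₂ (and independent of α₀, H₁, H₂), such that ‖∂^α(uvw)‖₀ ≤ c_* H₁^{α₁−2} H₂^{α₂} [(|α|−2)!]^s for every α = (α₁,α₂) ≤ α₀ with |α| ≥ 2 (i.e. c_*^{−1} H₁ · uvw ∈ 𝒜₁). -/

import Mathlib

open Set

noncomputable section

/-- The closed strip `R̄ = ℝ × [p₀, 0]`. -/
def Strip (p₀ : ℝ) : Set (ℝ × ℝ) := {z : ℝ × ℝ | p₀ ≤ z.2 ∧ z.2 ≤ 0}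

/-- The mixed partial derivative `∂_q^a ∂_p^b f` of `f : ℝ² → ℝ` within the set `S`,
realized as the iterated Fréchet derivative within `S` applied to the corresponding
coordinate directions. -/
def mpw (S : Set (ℝ × ℝ)) (a b : ℕ) (f : ℝ × ℝ → ℝ) (z : ℝ × ℝ) : ℝ :=
  iteratedFDerivWithin ℝ (a + b) f S z
    (fun i => if (i : ℕ) < a then ((1 : ℝ), (0 : ℝ)) else ((0 : ℝ), (1 : ℝ)))

/-- `∂_q^a ∂_p^b f` within the strip `R̄`. -/
def pd (p₀ : ℝ) (a b : ℕ) (f : ℝ × ℝ → ℝ) : ℝ × ℝ → ℝ := mpw (Strip p₀) a b f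

/-- Euclidean distance on `ℝ²`. -/
def edist2 (z z' : ℝ × ℝ) : ℝ := Real.sqrt ((z.1 - z'.1) ^ 2 + (z.2 - z'.2) ^ 2)

/-- `sup_{R̄} |f|`. -/
def supS (p₀ : ℝ) (f : ℝ × ℝ → ℝ) : ℝ := sSup ((fun z => |f z|) '' Strip p₀)

/-- The Hölder seminorm of exponent `μ` of `f` over the strip `R̄`. -/
def hsemi (p₀ μ : ℝ) (f : ℝ × ℝ → ℝ) : ℝ :=
  sSup {y | ∃ z ∈ Strip p₀, ∃ z' ∈ Strip p₀, z ≠ z' ∧ y = |f z - f z'| / (edist2 z z') ^ μ}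

/-- The `C^k` sup-norm `‖f‖_k = Σ_{|α| ≤ k} sup_{R̄} |∂^α f|`. -/
def cknorm (p₀ : ℝ) (k : ℕ) (f : ℝ × ℝ → ℝ) : ℝ :=
  ∑ a ∈ Finset.range (k + 1), ∑ b ∈ Finset.range (k + 1 - a), supS p₀ (pd p₀ a b f)

/-- The Hölder norm `‖f‖_{k,μ} = ‖f‖_k + max_{|α| = k} [∂^α f]_μ`. -/
def hnorm (p₀ μ : ℝ) (k : ℕ) (f : ℝ × ℝ → ℝ) : ℝ :=
  cknorm p₀ k f + sSup {y | ∃ a b : ℕ, a + b = k ∧ y = hsemi p₀ μ (pd p₀ a b f)}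

/-- Boundedness of `f` on the strip (finiteness of `sup_{R̄} |f|`). -/
def bddS (p₀ : ℝ) (f : ℝ × ℝ → ℝ) : Prop := BddAbove ((fun z => |f z|) '' Strip p₀)

/-- Finiteness of the Hölder seminorm of `f` on the strip. -/
def bddH (p₀ μ : ℝ) (f : ℝ × ℝ → ℝ) : Prop :=
  BddAbove {y | ∃ z ∈ Strip p₀, ∃ z' ∈ Strip p₀, z ≠ z' ∧ y = |f z - f z'| / (edist2 z z') ^ μ}

/-- Finiteness of the `C^{k,μ}(R̄)` norm. -/
def finCk (p₀ μ : ℝ) (k : ℕ) (f : ℝ × ℝ → ℝ) : Prop :=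
  (∀ a b : ℕ, a + b ≤ k → bddS p₀ (pd p₀ a b f)) ∧
  (∀ a b : ℕ, a + b = k → bddH p₀ μ (pd p₀ a b f))

/-- Membership in `C^{k,μ}(R̄)`: `k` times continuously differentiable on the strip with
bounded derivatives, the top-order ones Hölder continuous of exponent `μ`. -/
def MemCk (p₀ μ : ℝ) (k : ℕ) (f : ℝ × ℝ → ℝ) : Prop :=
  ContDiffOn ℝ k f (Strip p₀) ∧ finCk p₀ μ k f

/-- The class `𝒜_j`: functions `f ∈ C^{|α₀|,μ}(R̄)` such that
`‖∂^α f‖₀ ≤ H₁^{α₁−j} H₂^{α₂} [(|α|−j−1)!]^s` for every `α ≤ α₀` with `|α| ≥ j+1`. -/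
def memA (p₀ μ s H₁ H₂ : ℝ) (α₀ : ℕ × ℕ) (j : ℕ) (f : ℝ × ℝ → ℝ) : Prop :=
  MemCk p₀ μ (α₀.1 + α₀.2) f ∧
  ∀ a b : ℕ, a ≤ α₀.1 → b ≤ α₀.2 → j + 1 ≤ a + b →
    ∀ z ∈ Strip p₀, |pd p₀ a b f z| ≤
      H₁ ^ ((a : ℤ) - (j : ℤ)) * H₂ ^ b * (Nat.factorial (a + b - (j + 1)) : ℝ) ^ s

/-!
Among functions satisfying `|∂^α f| ≤ M · W(α)`, the Leibniz rule bounds the derivatives of a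
product as soon as `∑_{β ≤ α} (α choose β) W(β) W(α - β) ≤ C · W(α)`. The weight used here is
`W(α) = max 1 (H₁ ^ (α₁ - 2) * H₂ ^ α₂) * ((|α| - 2)!) ^ s`. Its first factor is submultiplicative,
and its second factor depends on `|α|` only, so the Chu–Vandermonde identity reduces the claim to
`∑_l (n choose l) ((l - 2)! (n - l - 2)!) ^ s ≤ C ((n - 2)!) ^ s`. As `s ≥ 1`, the power can be
pulled out of the sum, and the case `s = 1` holds because `(l - 2)!` is comparable to
`l! / (l + 1) ^ 2` and `∑ 1 / l ^ 2` converges.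
-/

open Finset.HasAntidiagonal (antidiagonal)

open scoped Nat

section BinomialSums

lemma sum_antidiagonal_succ_choose_nsmul {M : Type*} [AddCommMonoid M] (g : ℕ → ℕ → M) (n : ℕ) :
    ∑ l ∈ antidiagonal (n + 1), (n + 1).choose l.1 • g l.1 l.2 =
      ∑ l ∈ antidiagonal n, n.choose l.1 • (g l.1 (l.2 + 1) + g (l.1 + 1) l.2) := by
  simp only [Finset.sum_antidiagonal_choose_succ_nsmul, nsmul_add, Finset.sum_add_distrib]
  congr 1
  refine Finset.sum_congr rfl fun l hl => ?_
  rw [Nat.choose_symm_of_eq_add (Finset.HasAntidiagonal.mem_antidiagonal.1 hl).symm]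

/-- The Chu–Vandermonde identity, tested against an arbitrary `g`. -/
lemma sum_antidiagonal_choose_nsmul_sum_antidiagonal {M : Type*} [AddCommMonoid M]
    (g : ℕ → ℕ → M) (a b : ℕ) :
    ∑ i ∈ antidiagonal a, a.choose i.1 •
        ∑ j ∈ antidiagonal b, b.choose j.1 • g (i.1 + j.1) (i.2 + j.2) =
      ∑ l ∈ antidiagonal (a + b), (a + b).choose l.1 • g l.1 l.2 := by
  induction a generalizing g with
  | zero => simp
  | succ a ih =>
    rw [sum_antidiagonal_succ_choose_nsmul
        (fun x y => ∑ j ∈ antidiagonal b, b.choose j.1 • g (x + j.1) (y + j.2)),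
      Nat.add_right_comm a 1 b, sum_antidiagonal_succ_choose_nsmul,
      ← ih (fun x y => g x (y + 1) + g (x + 1) y)]
    simp only [← Finset.sum_add_distrib, ← nsmul_add, Nat.add_right_comm _ 1]

lemma sum_rpow_le_rpow_sum {ι : Type*} (t : Finset ι) {y : ι → ℝ} (hy : ∀ i ∈ t, 0 ≤ y i) {s : ℝ}
    (hs : 1 ≤ s) : ∑ i ∈ t, y i ^ s ≤ (∑ i ∈ t, y i) ^ s := by
  classical
  induction t using Finset.induction_on with
  | empty => simp [Real.zero_rpow (by linarith : s ≠ 0)]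
  | insert i t hi ih =>
    rw [Finset.forall_mem_insert] at hy
    rw [Finset.sum_insert hi, Finset.sum_insert hi]
    exact (add_le_add_right (ih hy.2) _).trans
      (Real.add_rpow_le_rpow_add hy.1 (Finset.sum_nonneg hy.2) hs)

lemma sum_antidiagonal_choose_mul_rpow_le {F : ℕ → ℝ} (hF : ∀ n, 0 ≤ F n) {C : ℝ} (hC : 0 ≤ C)
    {n : ℕ} (hconv : ∑ l ∈ antidiagonal n, (n.choose l.1 : ℝ) * (F l.1 * F l.2) ≤ C * F n)
    {s : ℝ} (hs : 1 ≤ s) :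
    ∑ l ∈ antidiagonal n, (n.choose l.1 : ℝ) * (F l.1 ^ s * F l.2 ^ s) ≤ C ^ s * F n ^ s := by
  have hnonneg (l : ℕ × ℕ) : 0 ≤ (n.choose l.1 : ℝ) * (F l.1 * F l.2) :=
    mul_nonneg (Nat.cast_nonneg _) (mul_nonneg (hF _) (hF _))
  calc ∑ l ∈ antidiagonal n, (n.choose l.1 : ℝ) * (F l.1 ^ s * F l.2 ^ s)
      ≤ ∑ l ∈ antidiagonal n, ((n.choose l.1 : ℝ) * (F l.1 * F l.2)) ^ s := by
        refine Finset.sum_le_sum fun l hl => ?_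
        have hchoose : (1 : ℝ) ≤ n.choose l.1 := by
          rw [Finset.HasAntidiagonal.mem_antidiagonal] at hl
          exact_mod_cast Nat.choose_pos (by omega)
        rw [Real.mul_rpow (Nat.cast_nonneg _) (mul_nonneg (hF _) (hF _)),
          Real.mul_rpow (hF _) (hF _)]
        exact mul_le_mul_of_nonneg_right (Real.self_le_rpow_of_one_le hchoose hs)
          (mul_nonneg (Real.rpow_nonneg (hF _) s) (Real.rpow_nonneg (hF _) s))
    _ ≤ (∑ l ∈ antidiagonal n, (n.choose l.1 : ℝ) * (F l.1 * F l.2)) ^ s :=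
        sum_rpow_le_rpow_sum _ (fun l _ => hnonneg l) hs
    _ ≤ (C * F n) ^ s :=
        Real.rpow_le_rpow (Finset.sum_nonneg fun l _ => hnonneg l) hconv (by linarith)
    _ = C ^ s * F n ^ s := Real.mul_rpow hC (hF n)

lemma factorial_sub_two_mul_succ_sq_le (n : ℕ) : (n - 2)! * (n + 1) ^ 2 ≤ 5 * n ! := by
  rcases n with _ | _ | n
  · simp
  · simp
  · rw [show n + 1 + 1 - 2 = n from rfl, Nat.factorial_succ (n + 1), Nat.factorial_succ n]
    nlinarith [n.factorial_pos, Nat.zero_le (n ! * n), Nat.zero_le (n ! * n ^ 2)]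

lemma factorial_le_factorial_sub_two_mul_sq (n : ℕ) : n ! ≤ (n - 2)! * (n + 2) ^ 2 := by
  rcases n with _ | _ | n
  · simp
  · simp
  · rw [show n + 1 + 1 - 2 = n from rfl, Nat.factorial_succ (n + 1), Nat.factorial_succ n]
    nlinarith [n.factorial_pos, Nat.zero_le (n ! * n), Nat.zero_le (n ! * n ^ 2)]

lemma choose_mul_factorial_sub_two_mul_le (x y : ℕ) :
    ((x + y).choose x : ℝ) * ((x - 2)! * (y - 2)!) ≤
      50 * (x + y - 2)! * (((x : ℝ) + 1) ^ 2)⁻¹ + 50 * (x + y - 2)! * (((y : ℝ) + 1) ^ 2)⁻¹ := by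
  have upper (n : ℕ) : ((n - 2)! : ℝ) ≤ 5 * n ! / ((n : ℝ) + 1) ^ 2 := by
    rw [le_div_iff₀ (by positivity)]
    exact_mod_cast factorial_sub_two_mul_succ_sq_le n
  have lower : ((x + y)! : ℝ) ≤ (x + y - 2)! * ((x : ℝ) + y + 2) ^ 2 := by
    exact_mod_cast factorial_le_factorial_sub_two_mul_sq (x + y)
  have choose_eq : ((x + y).choose x : ℝ) * x ! * y ! = (x + y)! := by
    rw [Nat.choose_symm_add]
    exact_mod_cast Nat.add_choose_mul_factorial_mul_factorial x y
  have sq_le : ((x : ℝ) + y + 2) ^ 2 ≤ 2 * (((x : ℝ) + 1) ^ 2 + ((y : ℝ) + 1) ^ 2) := by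
    linarith [add_sq_le (a := (x : ℝ) + 1) (b := (y : ℝ) + 1)]
  calc ((x + y).choose x : ℝ) * ((x - 2)! * (y - 2)!)
      ≤ (x + y).choose x * ((5 * x ! / ((x : ℝ) + 1) ^ 2) * (5 * y ! / ((y : ℝ) + 1) ^ 2)) := by
        gcongr <;> apply upper
    _ = 25 * (x + y)! / (((x : ℝ) + 1) ^ 2 * ((y : ℝ) + 1) ^ 2) := by
        rw [← choose_eq]
        field_simp
        norm_num
    _ ≤ 25 * ((x + y - 2)! * (2 * (((x : ℝ) + 1) ^ 2 + ((y : ℝ) + 1) ^ 2))) /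
          (((x : ℝ) + 1) ^ 2 * ((y : ℝ) + 1) ^ 2) := by
        gcongr
        exact lower.trans (by gcongr)
    _ = 50 * (x + y - 2)! * (((x : ℝ) + 1) ^ 2)⁻¹ +
          50 * (x + y - 2)! * (((y : ℝ) + 1) ^ 2)⁻¹ := by
        field_simp
        ring

lemma sum_range_inv_succ_sq_le_two (n : ℕ) :
    ∑ l ∈ Finset.range n, (((l : ℝ) + 1) ^ 2)⁻¹ ≤ 2 := by
  calc ∑ l ∈ Finset.range n, (((l : ℝ) + 1) ^ 2)⁻¹
      = ∑ i ∈ Finset.Ioo 0 (n + 1), ((i : ℝ) ^ 2)⁻¹ := by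
        rw [Finset.range_eq_Ico, ← Finset.Ico_add_one_left_eq_Ioo,
          ← Finset.sum_Ico_add' (fun i : ℕ => ((i : ℝ) ^ 2)⁻¹)]
        simp
    _ ≤ 2 := by simpa using sum_Ioo_inv_sq_le (α := ℝ) 0 (n + 1)

lemma sum_antidiagonal_choose_mul_factorial_sub_two_le (n : ℕ) :
    ∑ l ∈ antidiagonal n, (n.choose l.1 : ℝ) * ((l.1 - 2)! * (l.2 - 2)!) ≤ 200 * (n - 2)! := by
  have sum_fst : ∑ l ∈ antidiagonal n, (((l.1 : ℝ) + 1) ^ 2)⁻¹ ≤ 2 := by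
    rw [Finset.Nat.sum_antidiagonal_eq_sum_range_succ (fun x _ => (((x : ℝ) + 1) ^ 2)⁻¹)]
    exact sum_range_inv_succ_sq_le_two _
  have sum_snd : ∑ l ∈ antidiagonal n, (((l.2 : ℝ) + 1) ^ 2)⁻¹ ≤ 2 := by
    rwa [← Finset.Nat.sum_antidiagonal_swap]
  calc ∑ l ∈ antidiagonal n, (n.choose l.1 : ℝ) * ((l.1 - 2)! * (l.2 - 2)!)
      ≤ ∑ l ∈ antidiagonal n, (50 * ((n - 2)! : ℝ) * (((l.1 : ℝ) + 1) ^ 2)⁻¹ +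
          50 * ((n - 2)! : ℝ) * (((l.2 : ℝ) + 1) ^ 2)⁻¹) := by
        refine Finset.sum_le_sum fun l hl => ?_
        rw [← Finset.HasAntidiagonal.mem_antidiagonal.1 hl]
        exact choose_mul_factorial_sub_two_mul_le l.1 l.2
    _ = 50 * ((n - 2)! : ℝ) * ∑ l ∈ antidiagonal n, (((l.1 : ℝ) + 1) ^ 2)⁻¹ +
          50 * ((n - 2)! : ℝ) * ∑ l ∈ antidiagonal n, (((l.2 : ℝ) + 1) ^ 2)⁻¹ := by
        rw [Finset.sum_add_distrib, Finset.mul_sum, Finset.mul_sum]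
    _ ≤ 50 * ((n - 2)! : ℝ) * 2 + 50 * ((n - 2)! : ℝ) * 2 := by gcongr
    _ = 200 * (n - 2)! := by ring

end BinomialSums

section DirDerivWithin

variable {𝕜 E F 𝔸 : Type*} [NontriviallyNormedField 𝕜] [NormedAddCommGroup E] [NormedSpace 𝕜 E]
  [NormedAddCommGroup F] [NormedSpace 𝕜 F] [NormedRing 𝔸] [NormedAlgebra 𝕜 𝔸] {S : Set E}

variable (𝕜) in
/-- The derivative of `f` within `S` in the direction `e`, as a function of the base point, so that
it can be iterated. Unlike `lineDerivWithin`, it is a value of the Fréchet derivative. -/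
def dirDerivWithin (S : Set E) (e : E) (f : E → F) : E → F := fun x => fderivWithin 𝕜 f S x e

lemma contDiffOn_dirDerivWithin (hS : UniqueDiffOn 𝕜 S) (e : E) {f : E → F} {n : ℕ}
    (hf : ContDiffOn 𝕜 (n + 1 : ℕ) f S) : ContDiffOn 𝕜 n (dirDerivWithin 𝕜 S e f) S :=
  (hf.fderivWithin hS (by norm_cast)).clm_apply contDiffOn_const

lemma contDiffOn_iterate_dirDerivWithin (hS : UniqueDiffOn 𝕜 S) (e : E) {f : E → F} {n k N : ℕ}
    (hf : ContDiffOn 𝕜 N f S) (hN : n + k ≤ N) :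
    ContDiffOn 𝕜 n ((dirDerivWithin 𝕜 S e)^[k] f) S := by
  induction k generalizing n with
  | zero => exact hf.of_le (by exact_mod_cast hN)
  | succ k ih =>
    rw [Function.iterate_succ_apply']
    exact contDiffOn_dirDerivWithin hS e (ih (by omega))

lemma eqOn_dirDerivWithin (e : E) {f g : E → F} (h : EqOn f g S) :
    EqOn (dirDerivWithin 𝕜 S e f) (dirDerivWithin 𝕜 S e g) S := fun x hx => by
  simp only [dirDerivWithin, fderivWithin_congr h (h hx)]

lemma eqOn_iterate_dirDerivWithin (e : E) {f g : E → F} (h : EqOn f g S) (k : ℕ) :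
    EqOn ((dirDerivWithin 𝕜 S e)^[k] f) ((dirDerivWithin 𝕜 S e)^[k] g) S := by
  induction k with
  | zero => exact h
  | succ k ih =>
    simp only [Function.iterate_succ_apply']
    exact eqOn_dirDerivWithin e ih

lemma dirDerivWithin_sum_nsmul (hS : UniqueDiffOn 𝕜 S) (e : E) {ι : Type*} (t : Finset ι)
    (c : ι → ℕ) {G : ι → E → F} (hG : ∀ i ∈ t, DifferentiableOn 𝕜 (G i) S) :
    EqOn (dirDerivWithin 𝕜 S e fun y => ∑ i ∈ t, c i • G i y)
      (fun y => ∑ i ∈ t, c i • dirDerivWithin 𝕜 S e (G i) y) S := by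
  intro x hx
  simp only [dirDerivWithin]
  rw [fderivWithin_fun_sum (A := fun i y => c i • G i y) (hS x hx)
      fun i hi => (hG i hi x hx).const_smul (c i), sum_apply]
  refine Finset.sum_congr rfl fun i hi => ?_
  rw [fderivWithin_fun_const_smul (hS x hx) (hG i hi x hx), smul_apply]

lemma iterate_dirDerivWithin_sum_nsmul (hS : UniqueDiffOn 𝕜 S) (e : E) {ι : Type*} (t : Finset ι)
    (c : ι → ℕ) {G : ι → E → F} {k : ℕ} (hG : ∀ i ∈ t, ContDiffOn 𝕜 k (G i) S) :
    EqOn ((dirDerivWithin 𝕜 S e)^[k] fun y => ∑ i ∈ t, c i • G i y)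
      (fun y => ∑ i ∈ t, c i • (dirDerivWithin 𝕜 S e)^[k] (G i) y) S := by
  induction k generalizing G with
  | zero => exact fun _ _ => rfl
  | succ k ih =>
    have hsum := dirDerivWithin_sum_nsmul hS e t c
      fun i hi => (hG i hi).differentiableOn (by simp)
    simp only [Function.iterate_succ_apply]
    exact (eqOn_iterate_dirDerivWithin e hsum k).trans
      (ih fun i hi => contDiffOn_dirDerivWithin hS e (hG i hi))

lemma dirDerivWithin_mul (hS : UniqueDiffOn 𝕜 S) (e : E) {f g : E → 𝔸}
    (hf : DifferentiableOn 𝕜 f S) (hg : DifferentiableOn 𝕜 g S) :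
    EqOn (dirDerivWithin 𝕜 S e fun y => f y * g y)
      (fun y => f y * dirDerivWithin 𝕜 S e g y + dirDerivWithin 𝕜 S e f y * g y) S := by
  intro x hx
  simp [dirDerivWithin, fderivWithin_fun_mul' (hS x hx) (hf x hx) (hg x hx)]

lemma iterate_dirDerivWithin_mul (hS : UniqueDiffOn 𝕜 S) (e : E) {f g : E → 𝔸} {k : ℕ}
    (hf : ContDiffOn 𝕜 k f S) (hg : ContDiffOn 𝕜 k g S) :
    EqOn ((dirDerivWithin 𝕜 S e)^[k] fun y => f y * g y)
      (fun y => ∑ i ∈ antidiagonal k, k.choose i.1 •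
        ((dirDerivWithin 𝕜 S e)^[i.1] f y * (dirDerivWithin 𝕜 S e)^[i.2] g y)) S := by
  induction k with
  | zero => intro x _; simp
  | succ k ih =>
    have differentiableOn_iterate {h : E → 𝔸} (hh : ContDiffOn 𝕜 (k + 1 : ℕ) h S) {j : ℕ}
        (hj : j ≤ k) : DifferentiableOn 𝕜 ((dirDerivWithin 𝕜 S e)^[j] h) S :=
      (contDiffOn_iterate_dirDerivWithin hS e (n := 1) hh (by omega)).differentiableOn (by simp)
    have hdf {i : ℕ × ℕ} (hi : i ∈ antidiagonal k) :=
      differentiableOn_iterate hf (Finset.HasAntidiagonal.antidiagonal.fst_le hi)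
    have hdg {i : ℕ × ℕ} (hi : i ∈ antidiagonal k) :=
      differentiableOn_iterate hg (Finset.HasAntidiagonal.antidiagonal.snd_le hi)
    have ih := ih (hf.of_le (by norm_cast; omega)) (hg.of_le (by norm_cast; omega))
    intro x hx
    rw [Function.iterate_succ_apply', eqOn_dirDerivWithin e ih hx,
      dirDerivWithin_sum_nsmul hS e _ _ (fun i hi => (hdf hi).fun_mul (hdg hi)) hx]
    beta_reduce
    rw [sum_antidiagonal_succ_choose_nsmul fun i j =>
      (dirDerivWithin 𝕜 S e)^[i] f x * (dirDerivWithin 𝕜 S e)^[j] g x]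
    refine Finset.sum_congr rfl fun i hi => ?_
    simp only [dirDerivWithin_mul hS e (hdf hi) (hdg hi) hx, Function.iterate_succ_apply']

lemma iteratedFDerivWithin_succ_apply_eq_dirDerivWithin (hS : UniqueDiffOn 𝕜 S) {n : ℕ}
    {f : E → F} (hf : ContDiffOn 𝕜 (n + 1 : ℕ) f S) {x : E} (hx : x ∈ S) (m : Fin (n + 1) → E) :
    iteratedFDerivWithin 𝕜 (n + 1) f S x m =
      iteratedFDerivWithin 𝕜 n (dirDerivWithin 𝕜 S (m (Fin.last n)) f) S x (Fin.init m) := by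
  have hcomp := (ContinuousLinearMap.apply 𝕜 F (m (Fin.last n))).iteratedFDerivWithin_comp_left
    (hf.fderivWithin hS (m := n) (by norm_cast) x hx) hS hx le_rfl
  rw [iteratedFDerivWithin_succ_apply_right hS hx]
  exact (DFunLike.congr_fun hcomp (Fin.init m)).symm

end DirDerivWithin

section MixedDerivatives

variable {S : Set (ℝ × ℝ)} {f g : ℝ × ℝ → ℝ}

lemma mpw_succ_zero (hS : UniqueDiffOn ℝ S) {a : ℕ} (hf : ContDiffOn ℝ (a + 1 : ℕ) f S) :
    EqOn (mpw S (a + 1) 0 f) (mpw S a 0 (dirDerivWithin ℝ S (1, 0) f)) S := by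
  intro z hz
  refine (iteratedFDerivWithin_succ_apply_eq_dirDerivWithin hS (n := a) hf hz _).trans ?_
  simp only [Fin.val_last, Nat.lt_add_one, if_true]
  refine congrArg (iteratedFDerivWithin ℝ a _ S z) (funext fun i => ?_)
  simp [Fin.init, i.2, Nat.lt_succ_of_lt i.2]

lemma mpw_succ_right (hS : UniqueDiffOn ℝ S) {a b : ℕ} (hf : ContDiffOn ℝ (a + b + 1 : ℕ) f S) :
    EqOn (mpw S a (b + 1) f) (mpw S a b (dirDerivWithin ℝ S (0, 1) f)) S := by
  intro z hz
  refine (iteratedFDerivWithin_succ_apply_eq_dirDerivWithin hS (n := a + b) hf hz _).trans ?_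
  simp only [Fin.val_last, Nat.not_lt.2 (Nat.le_add_right a b), if_false]
  rfl

lemma mpw_eq_iterate_dirDerivWithin (hS : UniqueDiffOn ℝ S) {a b N : ℕ}
    (hf : ContDiffOn ℝ N f S) (hN : a + b ≤ N) :
    EqOn (mpw S a b f) ((dirDerivWithin ℝ S (1, 0))^[a] ((dirDerivWithin ℝ S (0, 1))^[b] f)) S := by
  replace hf : ContDiffOn ℝ (a + b : ℕ) f S := hf.of_le (by exact_mod_cast hN)
  clear hN
  induction b generalizing f with
  | zero =>
    induction a generalizing f with
    | zero => intro z _; simp [mpw]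
    | succ a ih => exact (mpw_succ_zero hS hf).trans (ih (contDiffOn_dirDerivWithin hS _ hf))
  | succ b ih => exact (mpw_succ_right hS hf).trans (ih (contDiffOn_dirDerivWithin hS _ hf))

lemma mpw_mul (hS : UniqueDiffOn ℝ S) {a b : ℕ} (hf : ContDiffOn ℝ (a + b : ℕ) f S)
    (hg : ContDiffOn ℝ (a + b : ℕ) g S) {z : ℝ × ℝ} (hz : z ∈ S) :
    mpw S a b (fun y => f y * g y) z =
      ∑ i ∈ antidiagonal a, ∑ j ∈ antidiagonal b,
        ((a.choose i.1 : ℝ) * b.choose j.1) * (mpw S i.1 j.1 f z * mpw S i.2 j.2 g z) := by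
  have contDiffOn_iterate {h : ℝ × ℝ → ℝ} (hh : ContDiffOn ℝ (a + b : ℕ) h S) {j : ℕ}
      (hj : j ≤ b) : ContDiffOn ℝ a ((dirDerivWithin ℝ S (0, 1))^[j] h) S :=
    contDiffOn_iterate_dirDerivWithin hS _ hh (by omega)
  have hcf {j : ℕ × ℕ} (hj : j ∈ antidiagonal b) :=
    contDiffOn_iterate hf (Finset.HasAntidiagonal.antidiagonal.fst_le hj)
  have hcg {j : ℕ × ℕ} (hj : j ∈ antidiagonal b) :=
    contDiffOn_iterate hg (Finset.HasAntidiagonal.antidiagonal.snd_le hj)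
  have leibniz_right := iterate_dirDerivWithin_mul hS (0, 1) (k := b)
    (hf.of_le (by norm_cast; omega)) (hg.of_le (by norm_cast; omega))
  rw [mpw_eq_iterate_dirDerivWithin hS (hf.mul hg) le_rfl hz,
    eqOn_iterate_dirDerivWithin (1, 0) leibniz_right a hz,
    iterate_dirDerivWithin_sum_nsmul hS (1, 0) _ _ (fun j hj => (hcf hj).mul (hcg hj)) hz,
    Finset.sum_comm]
  refine Finset.sum_congr rfl fun j hj => ?_
  rw [iterate_dirDerivWithin_mul hS (1, 0) (hcf hj) (hcg hj) hz, Finset.smul_sum]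
  refine Finset.sum_congr rfl fun i hi => ?_
  rw [Finset.HasAntidiagonal.mem_antidiagonal] at hi hj
  rw [mpw_eq_iterate_dirDerivWithin hS hf (by omega) hz,
    mpw_eq_iterate_dirDerivWithin hS hg (by omega) hz]
  simp only [nsmul_eq_mul]
  ring

end MixedDerivatives

section LeibnizWeight

/-- `W` dominates its own Leibniz convolution up to the factor `C`: this is what makes the functions
with `|∂_q^a ∂_p^b f| ≤ M * W a b` closed under products, see `MixedDerivBound.mul`. -/
def IsLeibnizWeight (C : ℝ) (W : ℕ → ℕ → ℝ) : Prop :=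
  ∀ a b : ℕ, ∑ i ∈ antidiagonal a, ∑ j ∈ antidiagonal b,
    ((a.choose i.1 : ℝ) * b.choose j.1) * (W i.1 j.1 * W i.2 j.2) ≤ C * W a b

lemma isLeibnizWeight_mul_of_submultiplicative {P : ℕ → ℕ → ℝ} {F : ℕ → ℝ} {C : ℝ}
    (hP : ∀ a b, 0 ≤ P a b) (hPmul : ∀ a b a' b', P a b * P a' b' ≤ P (a + a') (b + b'))
    (hF : ∀ n, 0 ≤ F n)
    (hconv : ∀ n, ∑ l ∈ antidiagonal n, (n.choose l.1 : ℝ) * (F l.1 * F l.2) ≤ C * F n) :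
    IsLeibnizWeight C (fun a b => P a b * F (a + b)) := by
  intro a b
  calc ∑ i ∈ antidiagonal a, ∑ j ∈ antidiagonal b, ((a.choose i.1 : ℝ) * b.choose j.1) *
        ((P i.1 j.1 * F (i.1 + j.1)) * (P i.2 j.2 * F (i.2 + j.2)))
      ≤ ∑ i ∈ antidiagonal a, ∑ j ∈ antidiagonal b, ((a.choose i.1 : ℝ) * b.choose j.1) *
          (P a b * (F (i.1 + j.1) * F (i.2 + j.2))) := by
        refine Finset.sum_le_sum fun i hi => Finset.sum_le_sum fun j hj => ?_
        rw [mul_mul_mul_comm (P _ _), ← Finset.HasAntidiagonal.mem_antidiagonal.1 hi,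
          ← Finset.HasAntidiagonal.mem_antidiagonal.1 hj]
        gcongr
        · exact mul_nonneg (hF _) (hF _)
        · exact hPmul _ _ _ _
    _ = P a b * ∑ l ∈ antidiagonal (a + b), ((a + b).choose l.1 : ℝ) * (F l.1 * F l.2) := by
        have vandermonde :=
          sum_antidiagonal_choose_nsmul_sum_antidiagonal (fun x y => F x * F y) a b
        simp only [nsmul_eq_mul] at vandermonde
        simp only [← vandermonde, Finset.mul_sum, mul_assoc, mul_left_comm (P a b)]
    _ ≤ P a b * (C * F (a + b)) := mul_le_mul_of_nonneg_left (hconv _) (hP a b)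
    _ = C * (P a b * F (a + b)) := mul_left_comm _ _ _

/-- The weight `H₁ ^ (a - 2) * H₂ ^ b * ((a + b - 2)!) ^ s` of the class `𝒜₂`, with its power part
truncated below at `1` so that it makes sense for all orders, including `a + b < 2`. -/
def gevreyWeight (s H₁ H₂ : ℝ) (a b : ℕ) : ℝ :=
  max 1 (H₁ ^ ((a : ℤ) - 2) * H₂ ^ b) * ((a + b - 2)! : ℝ) ^ s

variable {s H₁ H₂ : ℝ}

lemma one_le_gevreyWeight (hs : 0 ≤ s) (a b : ℕ) : 1 ≤ gevreyWeight s H₁ H₂ a b :=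
  one_le_mul_of_one_le_of_one_le (le_max_left _ _)
    (Real.one_le_rpow (by exact_mod_cast Nat.factorial_pos _) hs)

lemma one_le_zpow_sub_two_mul_pow (h₁ : 1 ≤ H₁) (h₁₂ : H₁ ≤ H₂) {a b : ℕ} (hab : 2 ≤ a + b) :
    1 ≤ H₁ ^ ((a : ℤ) - 2) * H₂ ^ b := by
  have h₀ : 0 < H₁ := by linarith
  calc (1 : ℝ) ≤ H₁ ^ ((a : ℤ) - 2 + b) := one_le_zpow₀ h₁ (by omega)
    _ = H₁ ^ ((a : ℤ) - 2) * H₁ ^ b := by rw [zpow_add₀ h₀.ne', zpow_natCast]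
    _ ≤ H₁ ^ ((a : ℤ) - 2) * H₂ ^ b := by gcongr

lemma gevreyWeight_of_two_le (h₁ : 1 ≤ H₁) (h₁₂ : H₁ ≤ H₂) {a b : ℕ} (hab : 2 ≤ a + b) :
    gevreyWeight s H₁ H₂ a b = H₁ ^ ((a : ℤ) - 2) * H₂ ^ b * ((a + b - 2)! : ℝ) ^ s := by
  rw [gevreyWeight, max_eq_right (one_le_zpow_sub_two_mul_pow h₁ h₁₂ hab)]

lemma max_one_zpow_sub_two_mul_pow_submultiplicative (h₁ : 1 ≤ H₁) (h₂ : 1 ≤ H₂) (a b a' b' : ℕ) :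
    max 1 (H₁ ^ ((a : ℤ) - 2) * H₂ ^ b) * max 1 (H₁ ^ ((a' : ℤ) - 2) * H₂ ^ b') ≤
      max 1 (H₁ ^ (((a + a' : ℕ) : ℤ) - 2) * H₂ ^ (b + b')) := by
  have h₀ : 0 < H₁ := by linarith
  have mono {m n : ℤ} {k l : ℕ} (hmn : m ≤ n) (hkl : k ≤ l) :
      H₁ ^ m * H₂ ^ k ≤ H₁ ^ n * H₂ ^ l := by gcongr
  rcases max_choice 1 (H₁ ^ ((a : ℤ) - 2) * H₂ ^ b) with h | h <;>
    rcases max_choice 1 (H₁ ^ ((a' : ℤ) - 2) * H₂ ^ b') with h' | h' <;> rw [h, h']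
  · simp
  · rw [one_mul]
    exact le_max_of_le_right (mono (by omega) (by omega))
  · rw [mul_one]
    exact le_max_of_le_right (mono (by omega) (by omega))
  · rw [mul_mul_mul_comm, ← zpow_add₀ h₀.ne', ← pow_add]
    exact le_max_of_le_right (mono (by omega) le_rfl)

lemma isLeibnizWeight_gevreyWeight (hs : 1 ≤ s) (h₁ : 1 ≤ H₁) (h₂ : 1 ≤ H₂) :
    IsLeibnizWeight (200 ^ s) (gevreyWeight s H₁ H₂) :=
  isLeibnizWeight_mul_of_submultiplicative (F := fun n => ((n - 2)! : ℝ) ^ s)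
    (fun _ _ => zero_le_one.trans (le_max_left _ _))
    (max_one_zpow_sub_two_mul_pow_submultiplicative h₁ h₂) (fun _ => by positivity)
    fun n => sum_antidiagonal_choose_mul_rpow_le (F := fun n => ((n - 2)! : ℝ))
      (fun _ => by positivity) (by norm_num) (sum_antidiagonal_choose_mul_factorial_sub_two_le n) hs

end LeibnizWeight

section MixedDerivBound

/-- `f` is `|α|` times continuously differentiable on `S`, and `M * W a b` bounds its derivative
`∂_q^a ∂_p^b f` on `S` for every `(a, b) ≤ α`. -/
structure MixedDerivBound (S : Set (ℝ × ℝ)) (α : ℕ × ℕ) (W : ℕ → ℕ → ℝ) (M : ℝ)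
    (f : ℝ × ℝ → ℝ) : Prop where
  contDiffOn : ContDiffOn ℝ (α.1 + α.2 : ℕ) f S
  abs_mpw_le : ∀ a b : ℕ, a ≤ α.1 → b ≤ α.2 → ∀ z ∈ S, |mpw S a b f z| ≤ M * W a b

lemma MixedDerivBound.mul {S : Set (ℝ × ℝ)} (hS : UniqueDiffOn ℝ S) {α : ℕ × ℕ}
    {W : ℕ → ℕ → ℝ} {C M N : ℝ} (hW : IsLeibnizWeight C W) (hM : 0 ≤ M) (hN : 0 ≤ N)
    {f g : ℝ × ℝ → ℝ} (hf : MixedDerivBound S α W M f) (hg : MixedDerivBound S α W N g) :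
    MixedDerivBound S α W (C * M * N) (fun y => f y * g y) where
  contDiffOn := hf.contDiffOn.mul hg.contDiffOn
  abs_mpw_le a b ha hb z hz := by
    have hab : ((a + b : ℕ) : WithTop ℕ∞) ≤ (α.1 + α.2 : ℕ) := by norm_cast; omega
    rw [mpw_mul hS (hf.contDiffOn.of_le hab) (hg.contDiffOn.of_le hab) hz]
    calc |∑ i ∈ antidiagonal a, ∑ j ∈ antidiagonal b,
          ((a.choose i.1 : ℝ) * b.choose j.1) * (mpw S i.1 j.1 f z * mpw S i.2 j.2 g z)|
        ≤ ∑ i ∈ antidiagonal a, ∑ j ∈ antidiagonal b,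
            ((a.choose i.1 : ℝ) * b.choose j.1) * ((M * W i.1 j.1) * (N * W i.2 j.2)) := by
          refine (Finset.abs_sum_le_sum_abs _ _).trans (Finset.sum_le_sum fun i hi => ?_)
          refine (Finset.abs_sum_le_sum_abs _ _).trans (Finset.sum_le_sum fun j hj => ?_)
          rw [Finset.HasAntidiagonal.mem_antidiagonal] at hi hj
          have hfz := hf.abs_mpw_le i.1 j.1 (by omega) (by omega) z hz
          have hgz := hg.abs_mpw_le i.2 j.2 (by omega) (by omega) z hz
          rw [abs_mul, abs_mul (mpw _ _ _ _ _), abs_of_nonneg (by positivity)]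
          exact mul_le_mul_of_nonneg_left
            (mul_le_mul hfz hgz (abs_nonneg _) ((abs_nonneg _).trans hfz)) (by positivity)
      _ = M * N * ∑ i ∈ antidiagonal a, ∑ j ∈ antidiagonal b,
            ((a.choose i.1 : ℝ) * b.choose j.1) * (W i.1 j.1 * W i.2 j.2) := by
          simp only [Finset.mul_sum]
          exact Finset.sum_congr rfl fun i _ => Finset.sum_congr rfl fun j _ => by ring
      _ ≤ M * N * (C * W a b) := mul_le_mul_of_nonneg_left (hW a b) (mul_nonneg hM hN)
      _ = C * M * N * W a b := by ring

end MixedDerivBound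

section Strip

variable {p₀ : ℝ} {f : ℝ × ℝ → ℝ}

lemma uniqueDiffOn_strip (hp₀ : p₀ < 0) : UniqueDiffOn ℝ (Strip p₀) := by
  have strip_eq : Strip p₀ = univ ×ˢ Icc p₀ 0 := by ext; simp [Strip]
  rw [strip_eq]
  exact uniqueDiffOn_univ.prod (uniqueDiffOn_Icc hp₀)

lemma supS_nonneg (p₀ : ℝ) (f : ℝ × ℝ → ℝ) : 0 ≤ supS p₀ f :=
  Real.sSup_nonneg (forall_mem_image.2 fun _ _ => abs_nonneg _)

lemma supS_pd_le_cknorm {a b k : ℕ} (hab : a + b ≤ k) :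
    supS p₀ (pd p₀ a b f) ≤ cknorm p₀ k f :=
  calc supS p₀ (pd p₀ a b f)
      ≤ ∑ b' ∈ Finset.range (k + 1 - a), supS p₀ (pd p₀ a b' f) :=
        Finset.single_le_sum (f := fun b' => supS p₀ (pd p₀ a b' f))
          (fun _ _ => supS_nonneg _ _) (Finset.mem_range.2 (by omega))
    _ ≤ cknorm p₀ k f :=
        Finset.single_le_sum
          (f := fun a' => ∑ b' ∈ Finset.range (k + 1 - a'), supS p₀ (pd p₀ a' b' f))
          (fun _ _ => Finset.sum_nonneg fun _ _ => supS_nonneg _ _)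
          (Finset.mem_range.2 (by omega))

lemma abs_pd_le_cknorm {a b k : ℕ} (hab : a + b ≤ k) (hbdd : bddS p₀ (pd p₀ a b f))
    {z : ℝ × ℝ} (hz : z ∈ Strip p₀) : |pd p₀ a b f z| ≤ cknorm p₀ k f :=
  (le_csSup hbdd ⟨z, hz, rfl⟩).trans (supS_pd_le_cknorm hab)

lemma memA.mixedDerivBound {μ s H₁ H₂ K : ℝ} {α₀ : ℕ × ℕ} (hf : memA p₀ μ s H₁ H₂ α₀ 2 f)
    (hs : 0 ≤ s) (h₁ : 1 ≤ H₁) (h₁₂ : H₁ ≤ H₂) (hK : cknorm p₀ 2 f ≤ K) :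
    MixedDerivBound (Strip p₀) α₀ (gevreyWeight s H₁ H₂) (max K 1) f where
  contDiffOn := hf.1.1
  abs_mpw_le a b ha hb z hz := by
    rcases Nat.lt_or_ge 2 (a + b) with hab | hab
    · have h₂ : 0 < H₂ := by linarith
      calc |mpw (Strip p₀) a b f z|
          ≤ H₁ ^ ((a : ℤ) - 2) * H₂ ^ b * ((a + b - 3)! : ℝ) ^ s := hf.2 a b ha hb hab z hz
        _ ≤ H₁ ^ ((a : ℤ) - 2) * H₂ ^ b * ((a + b - 2)! : ℝ) ^ s := by
            gcongr
            omega
        _ = gevreyWeight s H₁ H₂ a b := (gevreyWeight_of_two_le h₁ h₁₂ hab.le).symm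
        _ ≤ max K 1 * gevreyWeight s H₁ H₂ a b :=
            le_mul_of_one_le_left (zero_le_one.trans (one_le_gevreyWeight hs a b))
              (le_max_right K 1)
    · calc |mpw (Strip p₀) a b f z|
          ≤ cknorm p₀ 2 f := abs_pd_le_cknorm hab (hf.1.2.1 a b (by omega)) hz
        _ ≤ max K 1 := hK.trans (le_max_left _ _)
        _ ≤ max K 1 * gevreyWeight s H₁ H₂ a b :=
            le_mul_of_one_le_right (by positivity) (one_le_gevreyWeight hs a b)

end Strip

theorem memA_two_two_two_mul_general {s K : ℝ} (hs : 1 ≤ s) (hK : 0 ≤ K) :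
    ∃ c : ℝ, 1 ≤ c ∧ ∀ (S : Set (ℝ × ℝ)) (α₀ : ℕ × ℕ) (H₁ H₂ : ℝ) (u v w : ℝ × ℝ → ℝ),
      UniqueDiffOn ℝ S → 1 ≤ H₁ → H₁ ≤ H₂ →
      MixedDerivBound S α₀ (gevreyWeight s H₁ H₂) K u →
      MixedDerivBound S α₀ (gevreyWeight s H₁ H₂) K v →
      MixedDerivBound S α₀ (gevreyWeight s H₁ H₂) K w →
      ∀ a b : ℕ, a ≤ α₀.1 → b ≤ α₀.2 → 2 ≤ a + b → ∀ z ∈ S,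
        |mpw S a b (fun y => u y * v y * w y) z| ≤
          c * H₁ ^ ((a : ℤ) - 2) * H₂ ^ b * (Nat.factorial (a + b - 2) : ℝ) ^ s := by
  refine ⟨max 1 (200 ^ s * (200 ^ s * K * K) * K), le_max_left _ _, ?_⟩
  intro S α₀ H₁ H₂ u v w hS h₁ h₁₂ hu hv hw a b ha hb hab z hz
  have hW := isLeibnizWeight_gevreyWeight hs h₁ (h₁.trans h₁₂)
  have huv := hu.mul hS hW hK hK hv
  have huvw := huv.mul hS hW (by positivity) hK hw
  calc |mpw S a b (fun y => u y * v y * w y) z|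
      ≤ 200 ^ s * (200 ^ s * K * K) * K * gevreyWeight s H₁ H₂ a b :=
        huvw.abs_mpw_le a b ha hb z hz
    _ ≤ max 1 (200 ^ s * (200 ^ s * K * K) * K) * gevreyWeight s H₁ H₂ a b :=
        mul_le_mul_of_nonneg_right (le_max_right _ _)
          (zero_le_one.trans (one_le_gevreyWeight (by linarith) a b))
    _ = _ := by rw [gevreyWeight_of_two_le h₁ h₁₂ hab]; ring

/-- If `u, v, w ∈ 𝒜₂` then `c_*⁻¹ H₁ · uvw ∈ 𝒜₁` for a constant `c_*` depending only
on the `C²`-norms of `u, v, w` (and independent of `α₀, H₁, H₂`). -/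
theorem memA_two_two_two_mul (p₀ μ s K : ℝ) (hp₀ : p₀ < 0) (hμ : μ ∈ Set.Ioo (0 : ℝ) 1)
    (hs : 1 ≤ s) :
    ∃ c : ℝ, 1 ≤ c ∧ ∀ (α₀ : ℕ × ℕ) (H₁ H₂ : ℝ) (u v w : ℝ × ℝ → ℝ),
      3 ≤ α₀.1 + α₀.2 → 1 ≤ H₁ → H₁ ≤ H₂ →
      cknorm p₀ 2 u ≤ K → cknorm p₀ 2 v ≤ K → cknorm p₀ 2 w ≤ K →
      memA p₀ μ s H₁ H₂ α₀ 2 u → memA p₀ μ s H₁ H₂ α₀ 2 v → memA p₀ μ s H₁ H₂ α₀ 2 w →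
      ∀ a b : ℕ, a ≤ α₀.1 → b ≤ α₀.2 → 2 ≤ a + b → ∀ z ∈ Strip p₀,
        |pd p₀ a b (fun y => u y * v y * w y) z| ≤
          c * H₁ ^ ((a : ℤ) - 2) * H₂ ^ b * (Nat.factorial (a + b - 2) : ℝ) ^ s := by
  obtain ⟨c, hc, bound⟩ :=
    memA_two_two_two_mul_general hs (le_max_of_le_right zero_le_one : 0 ≤ max K 1)
  refine ⟨c, hc, fun α₀ H₁ H₂ u v w _ h₁ h₁₂ hKu hKv hKw hu hv hw =>
    bound (Strip p₀) α₀ H₁ H₂ u v w (uniqueDiffOn_strip hp₀) h₁ h₁₂ ?_ ?_ ?_⟩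
  exacts [hu.mixedDerivBound (by linarith) h₁ h₁₂ hKu, hv.mixedDerivBound (by linarith) h₁ h₁₂ hKv,
    hw.mixedDerivBound (by linarith) h₁ h₁₂ hKw]
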